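/- Let (a_i)_{i≥0} be a strictly increasing sequence of positive integers, S = {a_0, a_1, a_2, …}, and let n ≥ a_0 be an integer. Then r_S(n) = ∑_{i ≥ 0, a_i ≤ n} C(n − a_i + i, n − a_i), where C denotes the binomial coefficient. -/

import Mathlib

open Multiset Finset Filter

/-- A partition is encoded as a nonempty multiset of positive integers (its parts). -/
def IsPartition (M : Multiset ℕ) : Prop := M ≠ 0 ∧ ∀ x ∈ M, 0 < x

/-- The perimeter of a partition: (largest part) + (number of parts) - 1. -/
def perim (M : Multiset ℕ) : ℕ := M.sup + Multiset.card M - 1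

/-- `rP n P` counts the partitions (of any sum) with perimeter `n` satisfying `P`. -/
noncomputable def rP (n : ℕ) (P : Multiset ℕ → Prop) : ℕ :=
  Set.ncard {M : Multiset ℕ | IsPartition M ∧ perim M = n ∧ P M}

/-!
Let `X` be the set of allowed parts. A partition of perimeter `n` with largest part `m` has
`n - m + 1` parts, and removing one copy of `m` leaves an arbitrary multiset of `n - m` elements of
`{x ∈ X | x ≤ m}`. If `r` elements of `X` lie below `m`, this set has `r + 1` elements, which gives
`(n - m + r).choose (n - m)` multisets. For `X = Set.range a` and `m = a i`, we have `r = i`.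
-/

section Multisets

variable {α : Type*} [LinearOrder α]

theorem multiset_sup_mem [OrderBot α] {M : Multiset α} (hM : M ≠ 0) : M.sup ∈ M := by
  obtain ⟨x, hx, hsup⟩ :=
    Finset.exists_mem_eq_sup M.toFinset (Multiset.toFinset_nonempty.2 hM) id
  have hMx : M.sup = x := by simpa [Finset.sup_def] using hsup
  exact hMx ▸ Multiset.mem_toFinset.1 hx

theorem finset_card_sym {β : Type*} [DecidableEq β] (s : Finset β) (k : ℕ) :
    (s.sym k).card = s.card.multichoose k := by
  have hs : s.sym k = (s.attach.map (Function.Embedding.subtype (· ∈ s))).sym k := by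
    rw [Finset.attach_map_val]
  rw [hs, Finset.sym_map, Finset.card_map, Finset.attach_eq_univ, Finset.sym_univ,
    Finset.card_univ, Sym.card_sym_eq_multichoose, Fintype.card_coe]

/-- The multisets of `k + 1` elements of `s` with largest element `m` (for `m ∈ s`), obtained by
adding `m` to the multisets of `k` elements of `s` that are at most `m`. -/
def multisetsWithMax (s : Finset α) (k : ℕ) (m : α) : Finset (Multiset α) :=
  ({x ∈ s | x ≤ m}.sym k).image fun N : Sym α k => m ::ₘ (N : Multiset α)

theorem mem_multisetsWithMax [OrderBot α] {s : Finset α} {k : ℕ} {m : α} (hm : m ∈ s)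
    {M : Multiset α} :
    M ∈ multisetsWithMax s k m ↔
      (∀ x ∈ M, x ∈ s) ∧ M.sup = m ∧ Multiset.card M = k + 1 := by
  simp only [multisetsWithMax, Finset.mem_image, Finset.mem_sym_iff, Finset.mem_filter]
  constructor
  · rintro ⟨N, hN, rfl⟩
    refine ⟨Multiset.forall_mem_cons.2 ⟨hm, fun x hx => (hN x hx).1⟩, ?_, ?_⟩
    · rw [Multiset.sup_cons, sup_eq_left, Multiset.sup_le]
      exact fun x hx => (hN x hx).2
    · rw [Multiset.card_cons, Sym.card_coe]
  · rintro ⟨hs, rfl, hcard⟩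
    have hM : M ≠ 0 := Multiset.card_pos.1 (by omega)
    obtain ⟨N, hN⟩ := Multiset.exists_cons_of_mem (multiset_sup_mem hM)
    have hNM : ∀ x ∈ N, x ∈ M := fun x hx => hN ▸ Multiset.mem_cons_of_mem hx
    have hNk : Multiset.card N = k := by
      rw [hN, Multiset.card_cons] at hcard
      omega
    exact ⟨⟨N, hNk⟩, fun x hx => ⟨hs x (hNM x hx), Multiset.le_sup (hNM x hx)⟩, hN.symm⟩

theorem card_multisetsWithMax {s : Finset α} {m : α} (hm : m ∈ s) (k : ℕ) :
    (multisetsWithMax s k m).card = (k + {x ∈ s | x < m}.card).choose k := by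
  have hinj : Function.Injective fun N : Sym α k => m ::ₘ (N : Multiset α) :=
    fun _ _ h => Sym.coe_injective ((Multiset.cons_inj_right m).1 h)
  have hle : {x ∈ s | x ≤ m} = insert m {x ∈ s | x < m} := by
    ext x
    grind
  have hcard : {x ∈ s | x ≤ m}.card = {x ∈ s | x < m}.card + 1 := by
    rw [hle, Finset.card_insert_of_notMem (by simp)]
  rw [multisetsWithMax, Finset.card_image_of_injective _ hinj, finset_card_sym, hcard,
    Nat.multichoose_eq]
  congr 1
  omega

end Multisets

theorem setOf_isPartition_perim_eq_biUnion {X : Set ℕ} [DecidablePred (· ∈ X)] (hX : ∀ x ∈ X, 0 < x)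
    (n : ℕ) :
    {M | IsPartition M ∧ perim M = n ∧ ∀ x ∈ M, x ∈ X} =
      ({m ∈ Finset.range (n + 1) | m ∈ X}.biUnion fun m =>
        multisetsWithMax {x ∈ Finset.range (n + 1) | x ∈ X} (n - m) m : Set (Multiset ℕ)) := by
  ext M
  simp only [Set.mem_ofPred_eq, SetLike.mem_coe, Finset.mem_biUnion]
  constructor
  · rintro ⟨⟨hM, -⟩, hperim, hMX⟩
    have hcard : 0 < Multiset.card M := Multiset.card_pos.2 hM
    unfold perim at hperim
    have hmem : ∀ x ∈ M, x ∈ {x ∈ Finset.range (n + 1) | x ∈ X} := fun x hx => by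
      have hxsup := Multiset.le_sup hx
      exact Finset.mem_filter.2 ⟨Finset.mem_range.2 (by omega), hMX x hx⟩
    have hsup := hmem _ (multiset_sup_mem hM)
    exact ⟨M.sup, hsup, (mem_multisetsWithMax hsup).2 ⟨hmem, rfl, by omega⟩⟩
  · rintro ⟨m, hm, hM⟩
    obtain ⟨hmem, hsup, hcard⟩ := (mem_multisetsWithMax hm).1 hM
    have hMX : ∀ x ∈ M, x ∈ X := fun x hx => (Finset.mem_filter.1 (hmem x hx)).2
    have hmn : m < n + 1 := Finset.mem_range.1 (Finset.mem_filter.1 hm).1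
    refine ⟨⟨Multiset.card_pos.1 (by omega), fun x hx => hX x (hMX x hx)⟩, ?_, hMX⟩
    unfold perim
    omega

theorem stmt_10_general {X : Set ℕ} [DecidablePred (· ∈ X)] (hX : ∀ x ∈ X, 0 < x) (n : ℕ) :
    rP n (fun M => ∀ x ∈ M, x ∈ X) =
      ∑ m ∈ Finset.range (n + 1) with m ∈ X,
        (n - m + Nat.count (· ∈ X) m).choose (n - m) := by
  rw [rP, setOf_isPartition_perim_eq_biUnion hX, Set.ncard_coe_finset, Finset.card_biUnion]
  · refine Finset.sum_congr rfl fun m hm => ?_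
    have hbelow : {x ∈ {x ∈ Finset.range (n + 1) | x ∈ X} | x < m} =
        {x ∈ Finset.range m | x ∈ X} := by
      ext x
      grind
    rw [card_multisetsWithMax hm, hbelow, Nat.count_eq_card_filter_range]
  · intro m hm m' hm' hne
    refine Finset.disjoint_left.2 fun M hM hM' => hne ?_
    exact ((mem_multisetsWithMax hm).1 hM).2.1.symm.trans ((mem_multisetsWithMax hm').1 hM').2.1

section StrictMono

variable {a : ℕ → ℕ} [DecidablePred (· ∈ Set.range a)]

theorem count_mem_range_of_strictMono (ha : StrictMono a) (i : ℕ) :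
    Nat.count (· ∈ Set.range a) (a i) = i := by
  have hbelow : {x ∈ Finset.range (a i) | x ∈ Set.range a} = (Finset.range i).image a := by
    ext x
    simp only [Finset.mem_filter, Finset.mem_range, Finset.mem_image]
    constructor
    · rintro ⟨hx, j, rfl⟩
      exact ⟨j, ha.lt_iff_lt.1 hx, rfl⟩
    · rintro ⟨j, hj, rfl⟩
      exact ⟨ha hj, j, rfl⟩
  rw [Nat.count_eq_card_filter_range, hbelow, Finset.card_image_of_injective _ ha.injective,
    Finset.card_range]

theorem sum_filter_mem_range_of_strictMono {β : Type*} [AddCommMonoid β] (ha : StrictMono a)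
    (n : ℕ) (f : ℕ → β) :
    ∑ m ∈ Finset.range (n + 1) with m ∈ Set.range a, f m =
      ∑ i ∈ Finset.range (n + 1) with a i ≤ n, f (a i) := by
  have himage : {m ∈ Finset.range (n + 1) | m ∈ Set.range a} =
      {i ∈ Finset.range (n + 1) | a i ≤ n}.image a := by
    ext m
    simp only [Finset.mem_filter, Finset.mem_range, Finset.mem_image, Nat.lt_succ_iff]
    constructor
    · rintro ⟨hi, i, rfl⟩
      exact ⟨i, ⟨ha.le_apply.trans hi, hi⟩, rfl⟩
    · rintro ⟨i, ⟨-, hi⟩, rfl⟩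
      exact ⟨hi, i, rfl⟩
  rw [himage, Finset.sum_image ha.injective.injOn]

end StrictMono

theorem stmt_10 (a : ℕ → ℕ) (ha : StrictMono a) (hpos : ∀ i, 0 < a i)
    (n : ℕ) (hn : a 0 ≤ n) :
    rP n (fun M => ∀ x ∈ M, x ∈ Set.range a) =
      ∑ i ∈ (Finset.range (n + 1)).filter (fun i => a i ≤ n),
        Nat.choose (n - a i + i) (n - a i) := by
  classical
  simp only [stmt_10_general (Set.forall_mem_range.2 hpos), sum_filter_mem_range_of_strictMono ha,
    count_mem_range_of_strictMono ha]
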